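/- Suppose p = b+1 (so m = 0 and S = ∅ is the only admissible set). If E ⊆ {1,…,ℓ} satisfies 1 ≤ #E < ℓ, then ρ(g·φ_{∅,E}) = 0. -/

import Mathlib

open Finset MvPolynomial

noncomputable section

/-- Value of the elementary symmetric polynomial `e_k` at the family `v` restricted to `A`. -/
def esymVal {α F : Type*} [DecidableEq α] [CommRing F] (A : Finset α) (k : ℕ) (v : α → F) : F :=
  ∑ B ∈ A.powersetCard k, ∏ i ∈ B, v i

/-- Pochhammer symbol `(a)_k = a (a+1) ⋯ (a+k-1)`. -/
def poch (a : ℚ) (k : ℕ) : ℚ := ∏ i ∈ Finset.range k, (a + (i : ℚ))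

variable {p : ℕ}

/-- The index in `Fin (∑ t, n t)` of the `i`-th element of the `j`-th consecutive block. -/
def emb (n : Fin p → ℕ) (j : Fin p) (i : Fin (n j)) : Fin (∑ t, n t) :=
  ⟨(∑ t ∈ Finset.univ.filter (fun t => t < j), n t) + i, by
    have hj : j ∉ Finset.univ.filter (fun t => t < j) := by simp
    have h2 : ∑ t ∈ insert j (Finset.univ.filter (fun t => t < j)), n t ≤ ∑ t, n t :=
      Finset.sum_le_sum_of_subset (Finset.subset_univ _)
    rw [Finset.sum_insert hj] at h2
    have := i.isLt
    omega⟩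

/-- The Young subgroup: permutations mapping each block onto itself. -/
def youngGroup (n : Fin p → ℕ) : Finset (Equiv.Perm (Fin (∑ t, n t))) :=
  Finset.univ.filter fun w => ∀ (j : Fin p) (i : Fin (n j)), ∃ i' : Fin (n j),
    w (emb n j i) = emb n j i'

/-- The action of a permutation of the variables on polynomials, as a linear map. -/
def permAct {σ : Type*} (w : Equiv.Perm σ) :
    MvPolynomial σ ℚ →ₗ[ℚ] MvPolynomial σ ℚ :=
  (MvPolynomial.rename ⇑w).toLinearMap

/-- Averaging operator over the Young subgroup. -/
def rho (n : Fin p → ℕ) :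
    MvPolynomial (Fin (∑ t, n t)) ℚ →ₗ[ℚ] MvPolynomial (Fin (∑ t, n t)) ℚ :=
  ((youngGroup n).card : ℚ)⁻¹ • ∑ h ∈ youngGroup n, permAct h

/-- The alternating (Vandermonde) polynomial in the variables `x_{t 0}, …, x_{t b}`. -/
def Delta {N b : ℕ} (t : Fin (b + 1) → Fin N) : MvPolynomial (Fin N) ℚ :=
  ∏ q ∈ Finset.univ.filter (fun q : Fin (b + 1) × Fin (b + 1) => q.1 < q.2),
    (X (t q.1) - X (t q.2))

/-- The span of all `Δ(x_{i₁},…,x_{i_{b+1}})` with `i₁ < ⋯ < i_{b+1}`. -/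
def hookSpan (N b : ℕ) : Submodule ℚ (MvPolynomial (Fin N) ℚ) :=
  Submodule.span ℚ {f | ∃ t : Fin (b + 1) → Fin N, StrictMono t ∧ f = Delta t}

/-- The first `ℓ` block labels. -/
def firstL (p ℓ : ℕ) : Finset (Fin p) := Finset.univ.filter fun i => (i : ℕ) < ℓ


/-- The `(b+1)`-tuple of variable indices with block labels the elements of `J` in increasing
order, and coordinate inside block `j` chosen by `c`. -/
def tupleOf (n : Fin p → ℕ) {b : ℕ} (J : Finset (Fin p)) (hJ : J.card = b + 1)
    (c : ∀ j : ↥J, Fin (n j.1)) : Fin (b + 1) → Fin (∑ t, n t) :=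
  fun r => emb n (J.orderIsoOfFin hJ r).1 (c (J.orderIsoOfFin hJ r))

/-- The invariant polynomial `ξ_S`, where `J` is the complement of `S` (with `p` adjoined):
the sum of `Δ(x)` over all tuples with block labels `J` in increasing order. -/
def xiS (n : Fin p → ℕ) {b : ℕ} (J : Finset (Fin p)) (hJ : J.card = b + 1) :
    MvPolynomial (Fin (∑ t, n t)) ℚ :=
  ∑ c : (∀ j : ↥J, Fin (n j.1)), Delta (tupleOf n J hJ c)

/-- The partial sum `φ_{S,E}` of `ξ_S`: only tuples whose coordinate in block `j` is the first
one for `j ∈ E`, and is not the first one for `j ∉ E` with `j` among the first `ℓ` blocks. -/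
def phiSE (n : Fin p → ℕ) {b : ℕ} (ℓ : ℕ) (J E : Finset (Fin p)) (hJ : J.card = b + 1) :
    MvPolynomial (Fin (∑ t, n t)) ℚ :=
  ∑ c ∈ Finset.univ.filter (fun c : ∀ j : ↥J, Fin (n j.1) =>
      ∀ j : ↥J, (j.1 ∈ E → (c j : ℕ) = 0) ∧ ((j.1 : ℕ) < ℓ → j.1 ∉ E → (c j : ℕ) ≠ 0)),
    Delta (tupleOf n J hJ c)

theorem emb_lt_aux (n : Fin p → ℕ) {j j' : Fin p} (h : j < j') (i : Fin (n j)) (i' : Fin (n j')) :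
    (emb n j i : ℕ) < emb n j' i' := by
  have hj : j ∉ Finset.univ.filter (fun t => t < j) := by simp
  have h2 : ∑ t ∈ insert j (Finset.univ.filter (fun t => t < j)), n t
      ≤ ∑ t ∈ Finset.univ.filter (fun t => t < j'), n t := by
    apply Finset.sum_le_sum_of_subset
    intro t ht
    simp only [Finset.mem_insert, Finset.mem_filter, Finset.mem_univ, true_and] at ht ⊢
    rcases ht with rfl | ht
    · exact h
    · exact ht.trans h
  rw [Finset.sum_insert hj] at h2
  have := i.isLt
  simp only [emb]
  omega

theorem emb_block_inj (n : Fin p → ℕ) {j j' : Fin p} {i : Fin (n j)} {i' : Fin (n j')}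
    (h : emb n j i = emb n j' i') : j = j' ∧ (i : ℕ) = i' := by
  have h' : (emb n j i : ℕ) = emb n j' i' := by rw [h]
  rcases lt_trichotomy j j' with hlt | rfl | hlt
  · have := emb_lt_aux n hlt i i'
    omega
  · refine ⟨rfl, ?_⟩
    simp only [emb] at h'
    omega
  · have := emb_lt_aux n hlt i' i
    omega

theorem Delta_eq_det {N b : ℕ} (t : Fin (b + 1) → Fin N) :
    Delta t = (Matrix.vandermonde (fun i => -(X (t i) : MvPolynomial (Fin N) ℚ))).det := by
  rw [Matrix.det_vandermonde, Delta, Finset.prod_filter, Fintype.prod_prod_type]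
  refine Finset.prod_congr rfl fun i _ => ?_
  rw [← Finset.prod_filter]
  refine Finset.prod_congr ?_ fun j _ => by ring
  ext j
  simp

theorem Delta_swap {N b : ℕ} (t : Fin (b + 1) → Fin N) {r s : Fin (b + 1)} (hrs : r ≠ s) :
    Delta (t ∘ Equiv.swap r s) = - Delta t := by
  rw [Delta_eq_det, Delta_eq_det]
  have := Matrix.det_permute (Equiv.swap r s)
    (Matrix.vandermonde (fun i => -(X (t i) : MvPolynomial (Fin N) ℚ)))
  rw [Equiv.Perm.sign_swap hrs] at this
  simp only [Units.val_neg, Units.val_one, Int.cast_neg, Int.cast_one, neg_mul, one_mul] at this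
  rw [← this]
  rfl

theorem permAct_Delta {N b : ℕ} (w : Equiv.Perm (Fin N)) (t : Fin (b + 1) → Fin N) :
    permAct w (Delta t) = Delta (w ∘ t) := by
  simp [permAct, Delta, map_prod]

theorem swap_mem_young (n : Fin p → ℕ) (k : Fin p) (a a' : Fin (n k)) :
    Equiv.swap (emb n k a) (emb n k a') ∈ youngGroup n := by
  simp only [youngGroup, Finset.mem_filter, Finset.mem_univ, true_and]
  intro j i
  by_cases h1 : emb n j i = emb n k a
  · obtain ⟨rfl, -⟩ := emb_block_inj n h1
    exact ⟨a', by rw [h1, Equiv.swap_apply_left]⟩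
  by_cases h2 : emb n j i = emb n k a'
  · obtain ⟨rfl, -⟩ := emb_block_inj n h2
    exact ⟨a, by rw [h2, Equiv.swap_apply_right]⟩
  exact ⟨i, Equiv.swap_apply_of_ne_of_ne h1 h2⟩

theorem young_mul (n : Fin p → ℕ) {u v : Equiv.Perm (Fin (∑ t, n t))}
    (hu : u ∈ youngGroup n) (hv : v ∈ youngGroup n) : u * v ∈ youngGroup n := by
  simp only [youngGroup, Finset.mem_filter, Finset.mem_univ, true_and] at *
  intro j i
  obtain ⟨i', h'⟩ := hv j i
  obtain ⟨i'', h''⟩ := hu j i'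
  exact ⟨i'', by rw [Equiv.Perm.mul_apply, h', h'']⟩

theorem rho_Delta_zero (n : Fin p → ℕ) {b : ℕ} (t : Fin (b + 1) → Fin (∑ t, n t))
    (ht : Function.Injective t) {r s : Fin (b + 1)} (hrs : r ≠ s) (k : Fin p) (a a' : Fin (n k))
    (hr : t r = emb n k a) (hs : t s = emb n k a') : rho n (Delta t) = 0 := by
  have hw : Equiv.swap (t r) (t s) ∈ youngGroup n := by
    rw [hr, hs]
    exact swap_mem_young n k a a'
  have hcomp : (Equiv.swap (t r) (t s)) ∘ t = t ∘ Equiv.swap r s := by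
    funext q
    simp only [Function.comp]
    exact (ht.map_swap r s q).symm
  have key : ∑ h ∈ youngGroup n, permAct h (Delta t) = 0 := by
    have h1 : ∑ h ∈ youngGroup n, permAct h (Delta t)
        = ∑ h ∈ youngGroup n, permAct (h * Equiv.swap (t r) (t s)) (Delta t) := by
      symm
      refine Finset.sum_nbij' (fun h => h * Equiv.swap (t r) (t s))
        (fun h => h * Equiv.swap (t r) (t s)) ?_ ?_ ?_ ?_ ?_
      · exact fun h hh => young_mul n hh hw
      · exact fun h hh => young_mul n hh hw
      · intro h _
        simp [mul_assoc]
      · intro h _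
        simp [mul_assoc]
      · intro h _
        rfl
    have h2 : ∀ h : Equiv.Perm (Fin (∑ t, n t)),
        permAct (h * Equiv.swap (t r) (t s)) (Delta t) = - permAct h (Delta t) := by
      intro h
      rw [permAct_Delta, Equiv.Perm.coe_mul, Function.comp_assoc, hcomp, ← permAct_Delta,
        Delta_swap t hrs, map_neg]
    simp only [h2, Finset.sum_neg_distrib] at h1
    exact self_eq_neg.mp h1
  simp only [rho, LinearMap.smul_apply, LinearMap.sum_apply, key, smul_zero]

theorem exists_exit {ℓ : ℕ} (hℓ2 : 2 ≤ ℓ) (hℓp : ℓ ≤ p) (E : Finset (Fin p))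
    (hE : ∀ j ∈ E, (j : ℕ) < ℓ) (hE1 : 1 ≤ E.card) (hE2 : E.card < ℓ) :
    ∃ j ∈ E, ∃ k : Fin p, k ∉ E ∧ (k : ℕ) < ℓ ∧
      ((k : ℕ) = (j : ℕ) + 1 ∨ ((j : ℕ) = ℓ - 1 ∧ (k : ℕ) = 0)) := by
  by_contra hcon
  push Not at hcon
  obtain ⟨j0, hj0⟩ := Finset.card_pos.mp hE1
  have up : ∀ d : ℕ, ∀ j ∈ E, ∀ k : Fin p, (k : ℕ) = j + d → (k : ℕ) < ℓ → k ∈ E := by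
    intro d
    induction d with
    | zero =>
      intro j hj k hk _
      have : k = j := Fin.ext (by omega)
      rwa [this]
    | succ d ih =>
      intro j hj k hk hkl
      have hm := ih j hj ⟨(j : ℕ) + d, by omega⟩ rfl (by simp only; omega)
      by_contra hkE
      exact (hcon _ hm k hkE hkl).1 (by simp only; omega)
  have hlast : (⟨ℓ - 1, by omega⟩ : Fin p) ∈ E :=
    up (ℓ - 1 - j0) j0 hj0 _ (by have := hE j0 hj0; simp only; omega) (by simp only; omega)
  have hzero : (⟨0, by omega⟩ : Fin p) ∈ E := by
    by_contra h0
    exact (hcon _ hlast _ h0 (by simp only; omega)).2 rfl rfl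
  have hsub : (Finset.univ : Finset (Fin ℓ)).map (Fin.castLEEmb hℓp) ⊆ E := by
    intro k hk
    simp only [Finset.mem_map, Finset.mem_univ, true_and] at hk
    obtain ⟨q, rfl⟩ := hk
    exact up q _ hzero _ (by simp) (by simp)
  have := Finset.card_le_card hsub
  simp at this
  omega

/-- Proposition 4.1: in the case `p = b+1` (so `S = ∅` and `J = univ`), if `1 ≤ #E < ℓ`
then `ρ(g·φ_{∅,E}) = 0`. -/
theorem rho_g_phi_eq_zero (p b ℓ : ℕ) (n : Fin p → ℕ) (hn : ∀ j, 0 < n j)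
    (hp : p = b + 1) (hℓ2 : 2 ≤ ℓ) (hℓp : ℓ ≤ p)
    (g : Equiv.Perm (Fin (∑ t, n t)))
    (hg1 : ∀ j k : Fin p, (k : ℕ) = (j : ℕ) + 1 → (k : ℕ) < ℓ →
      g (emb n j ⟨0, hn j⟩) = emb n k ⟨0, hn k⟩)
    (hg2 : ∀ j j' : Fin p, (j : ℕ) = ℓ - 1 → (j' : ℕ) = 0 →
      g (emb n j ⟨0, hn j⟩) = emb n j' ⟨0, hn j'⟩)
    (hg3 : ∀ a, (∀ j : Fin p, (j : ℕ) < ℓ → a ≠ emb n j ⟨0, hn j⟩) → g a = a)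
    (hJ : (Finset.univ : Finset (Fin p)).card = b + 1)
    (E : Finset (Fin p)) (hE : ∀ j ∈ E, (j : ℕ) < ℓ)
    (hE1 : 1 ≤ E.card) (hE2 : E.card < ℓ) :
    rho n (permAct g (phiSE n ℓ Finset.univ E hJ)) = 0 := by
  obtain ⟨j, hjE, k, hkE, hkl, hjk⟩ := exists_exit hℓ2 hℓp E hE hE1 hE2
  have hgj : g (emb n j ⟨0, hn j⟩) = emb n k ⟨0, hn k⟩ := by
    rcases hjk with h | ⟨h, h'⟩
    · exact hg1 j k h hkl
    · exact hg2 j k h h'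
  have hne : j ≠ k := fun h => hkE (h ▸ hjE)
  rw [phiSE, map_sum, map_sum]
  refine Finset.sum_eq_zero fun c hc => ?_
  simp only [Finset.mem_filter, Finset.mem_univ, true_and] at hc
  rw [permAct_Delta]
  set o := (Finset.univ : Finset (Fin p)).orderIsoOfFin hJ with ho
  have hinj : Function.Injective (tupleOf n Finset.univ hJ c) := by
    intro r s hrs
    have := (emb_block_inj n hrs).1
    exact o.injective (Subtype.ext this)
  have hval : ∀ q : ↥(Finset.univ : Finset (Fin p)),
      tupleOf n Finset.univ hJ c (o.symm q) = emb n q.1 (c q) := by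
    intro q
    have : ∀ q', q' = q → emb n q'.1 (c q') = emb n q.1 (c q) := by
      rintro _ rfl
      rfl
    exact this _ (o.apply_symm_apply q)
  have hcj : c ⟨j, Finset.mem_univ j⟩ = ⟨0, hn j⟩ :=
    Fin.ext ((hc ⟨j, Finset.mem_univ j⟩).1 hjE)
  have hck := (hc ⟨k, Finset.mem_univ k⟩).2 hkl hkE
  refine rho_Delta_zero n _ (g.injective.comp hinj)
    (r := o.symm ⟨j, Finset.mem_univ j⟩) (s := o.symm ⟨k, Finset.mem_univ k⟩) ?_ k
    ⟨0, hn k⟩ (c ⟨k, Finset.mem_univ k⟩) ?_ ?_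
  · intro h
    exact hne (congrArg Subtype.val (o.symm.injective h))
  · rw [Function.comp_apply, hval, hcj, hgj]
  · rw [Function.comp_apply, hval]
    apply hg3
    intro j' _ h
    exact hck (emb_block_inj n h).2

end
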